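/- Let E₁, E₂ be real vector spaces, C₁ ⊂ E₁ \ {0} and C₂ ⊂ E₂ \ {0} convex cones with Hilbert projective (pseudo-)metrics θ₁, θ₂, and L : E₁ → E₂ a linear map with L(C₁) ⊂ C₂. If D := sup{θ₂(L v₁, L v₂) : v₁, v₂ ∈ C₁} is finite, then θ₂(L v₁, L v₂) ≤ (1 − e^{−D})·θ₁(v₁, v₂) for all v₁, v₂ ∈ C₁. -/

import Mathlib

open Set

noncomputable section

/-- A cone of a real vector space: a subset of `E \ {0}` closed under positive scalar
multiplication. -/
def IsCone {E : Type*} [AddCommGroup E] [Module ℝ E] (C : Set E) : Prop :=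
  (0 : E) ∉ C ∧ ∀ v ∈ C, ∀ s : ℝ, 0 < s → s • v ∈ C

/-- Convexity of a cone: closedness under positive linear combinations. -/
def IsConvexCone {E : Type*} [AddCommGroup E] [Module ℝ E] (C : Set E) : Prop :=
  IsCone C ∧ ∀ v₁ ∈ C, ∀ v₂ ∈ C, ∀ s₁ s₂ : ℝ, 0 < s₁ → 0 < s₂ → s₁ • v₁ + s₂ • v₂ ∈ C

/-- `α(v₁,v₂) = sup{s > 0 : v₂ - s•v₁ ∈ C}`. -/
def hilbertAlphaSet {E : Type*} [AddCommGroup E] [Module ℝ E] (C : Set E) (v₁ v₂ : E) :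
    Set ℝ := {s : ℝ | 0 < s ∧ v₂ - s • v₁ ∈ C}

/-- `β(v₁,v₂) = inf{s > 0 : s•v₁ - v₂ ∈ C}`. -/
def hilbertBetaSet {E : Type*} [AddCommGroup E] [Module ℝ E] (C : Set E) (v₁ v₂ : E) :
    Set ℝ := {s : ℝ | 0 < s ∧ s • v₁ - v₂ ∈ C}

open scoped Classical

/-- The Hilbert projective (pseudo-)metric `θ(v₁,v₂) = log(β(v₁,v₂)/α(v₁,v₂))`, with values
in `[0,∞]` (the value is `∞` when `β = ∞` or `α = 0`, i.e. when one of the defining sets is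
empty). -/
noncomputable def hilbertTheta {E : Type*} [AddCommGroup E] [Module ℝ E] (C : Set E)
    (v₁ v₂ : E) : EReal :=
  if (hilbertBetaSet C v₁ v₂).Nonempty ∧ (hilbertAlphaSet C v₁ v₂).Nonempty then
    ((Real.log (sInf (hilbertBetaSet C v₁ v₂) / sSup (hilbertAlphaSet C v₁ v₂)) : ℝ) : EReal)
  else ⊤

theorem alpha_le_beta {E : Type*} [AddCommGroup E] [Module ℝ E] {C : Set E}
    (hC : IsConvexCone C) {v w : E} (hv : v ∈ C) {a b : ℝ}
    (ha : a ∈ hilbertAlphaSet C v w) (hb : b ∈ hilbertBetaSet C v w) : a ≤ b := by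
  by_contra! h
  have h1 := hC.2 _ ha.2 _ hb.2 1 1 one_pos one_pos
  have h2 := hC.2 _ h1 _ hv 1 (a - b) one_pos (by linarith)
  have : (1:ℝ) • ((1:ℝ) • (w - a • v) + (1:ℝ) • (b • v - w)) + (a - b) • v = 0 := by module
  rw [this] at h2
  exact hC.1.1 h2

theorem theta_spec {E : Type*} [AddCommGroup E] [Module ℝ E] {C : Set E}
    (hC : IsConvexCone C) {v w : E} (hv : v ∈ C)
    (hB : (hilbertBetaSet C v w).Nonempty) (hA : (hilbertAlphaSet C v w).Nonempty) :
    0 < sSup (hilbertAlphaSet C v w) ∧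
    sSup (hilbertAlphaSet C v w) ≤ sInf (hilbertBetaSet C v w) ∧
    BddAbove (hilbertAlphaSet C v w) ∧ BddBelow (hilbertBetaSet C v w) := by
  obtain ⟨b, hb⟩ := id hB
  obtain ⟨a, ha⟩ := id hA
  have bA : BddAbove (hilbertAlphaSet C v w) := ⟨b, fun x hx => alpha_le_beta hC hv hx hb⟩
  have bB : BddBelow (hilbertBetaSet C v w) := ⟨a, fun x hx => alpha_le_beta hC hv ha hx⟩
  exact ⟨ha.1.trans_le (le_csSup bA ha), csSup_le hA fun x hx => le_csInf hB fun y hy =>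
    alpha_le_beta hC hv hx hy, bA, bB⟩

theorem theta_le_spec {E : Type*} [AddCommGroup E] [Module ℝ E] {C : Set E}
    {v w : E} {D : ℝ} (h : hilbertTheta C v w ≤ (D : EReal)) :
    (hilbertBetaSet C v w).Nonempty ∧ (hilbertAlphaSet C v w).Nonempty ∧
    Real.log (sInf (hilbertBetaSet C v w) / sSup (hilbertAlphaSet C v w)) ≤ D := by
  unfold hilbertTheta at h
  split_ifs at h with hh
  · exact ⟨hh.1, hh.2, by exact_mod_cast h⟩
  · simp at h

theorem limit_lemma {A B : Set ℝ} (hA : A.Nonempty) (hB : B.Nonempty) (bA : BddAbove A)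
    (bB : BddBelow B) (p q : ℝ) (h : ∀ t ∈ A, ∀ s ∈ B, p * t ≤ q * s) :
    p * sSup A ≤ q * sInf B := by
  have hcl : IsClosed {x : ℝ × ℝ | p * x.1 ≤ q * x.2} :=
    isClosed_le (by fun_prop) (by fun_prop)
  have hm : (sSup A, sInf B) ∈ closure (A ×ˢ B) := by
    rw [closure_prod_eq]
    exact ⟨csSup_mem_closure hA bA, csInf_mem_closure hB bB⟩
  have hs : A ×ˢ B ⊆ {x : ℝ × ℝ | p * x.1 ≤ q * x.2} := fun x hx => h _ hx.1 _ hx.2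
  exact closure_minimal hs hcl hm

theorem log_ineq {T S y : ℝ} (hT : 0 < T) (hTS : T ≤ S) (hy : 1 ≤ y) :
    Real.log (y + T) - Real.log (y + S) + Real.log (1 + S) - Real.log (1 + T)
      ≤ (1 - T / S) * Real.log y := by
  have hS : 0 < S := hT.trans_le hTS
  have hd : ∀ x : ℝ, 0 < x → HasDerivAt
      (fun z => (1 - T / S) * Real.log z - Real.log (z + T) + Real.log (z + S))
      ((1 - T / S) * x⁻¹ - 1 / (x + T) + 1 / (x + S)) x := by
    intro x hx
    have h1 := (Real.hasDerivAt_log hx.ne').const_mul (1 - T / S)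
    have h2 := ((hasDerivAt_id x).add_const T).log (by simp; positivity)
    have h3 := ((hasDerivAt_id x).add_const S).log (by simp; positivity)
    exact (h1.sub h2).add h3
  have hm : MonotoneOn
      (fun z => (1 - T / S) * Real.log z - Real.log (z + T) + Real.log (z + S)) (Ici 1) := by
    apply monotoneOn_of_deriv_nonneg (convex_Ici 1)
    · intro x hx
      exact (hd x (lt_of_lt_of_le one_pos hx)).continuousAt.continuousWithinAt
    · intro x hx
      rw [interior_Ici] at hx
      exact (hd x (one_pos.trans hx)).differentiableAt.differentiableWithinAt
    · intro x hx
      rw [interior_Ici] at hx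
      have hx0 : 0 < x := one_pos.trans hx
      rw [(hd x hx0).deriv]
      have : (1 - T / S) * x⁻¹ - 1 / (x + T) + 1 / (x + S)
          = (S - T) * (x ^ 2 + T * x + T * S) / (S * x * (x + T) * (x + S)) := by
        field_simp
        ring
      rw [this]
      have : 0 ≤ S - T := by linarith
      positivity
  have := hm (mem_Ici.2 le_rfl) (mem_Ici.2 hy) hy
  simp only [Real.log_one] at this
  linarith

theorem real_contraction {E₁ E₂ : Type*} [AddCommGroup E₁] [Module ℝ E₁]
    [AddCommGroup E₂] [Module ℝ E₂]
    (C₁ : Set E₁) (C₂ : Set E₂) (hC₁ : IsConvexCone C₁) (hC₂ : IsConvexCone C₂)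
    (L : E₁ →ₗ[ℝ] E₂) (hmaps : ∀ v ∈ C₁, L v ∈ C₂)
    (D : ℝ) (hD : ∀ v₁ ∈ C₁, ∀ v₂ ∈ C₁, hilbertTheta C₂ (L v₁) (L v₂) ≤ (D : EReal))
    (v w : E₁) (hv : v ∈ C₁) (hw : w ∈ C₁) (a b : ℝ)
    (ha : a ∈ hilbertAlphaSet C₁ v w) (hb : b ∈ hilbertBetaSet C₁ v w) :
    Real.log (sInf (hilbertBetaSet C₂ (L v) (L w)) / sSup (hilbertAlphaSet C₂ (L v) (L w)))
      ≤ (1 - Real.exp (-D)) * Real.log (b / a) := by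
  obtain ⟨nB, nA, -⟩ := theta_le_spec (hD v hv w hw)
  obtain ⟨pα, hαβ, bA, bB⟩ := theta_spec hC₂ (hmaps v hv) nB nA
  obtain ⟨nB', nA', hD'⟩ := theta_le_spec (hD _ ha.2 _ hb.2)
  obtain ⟨pα', hαβ', bA', bB'⟩ := theta_spec hC₂ (hmaps _ ha.2) nB' nA'
  have hab := alpha_le_beta hC₁ hv ha hb
  have ha0 := ha.1
  have hb0 := hb.1
  have hl : 0 ≤ Real.log (b / a) := Real.log_nonneg ((one_le_div ha0).2 hab)
  have key := limit_lemma nA' nB' bA' bB' (Real.log (b / a)) (Real.log (b / a) -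
    Real.log (sInf (hilbertBetaSet C₂ (L v) (L w)) / sSup (hilbertAlphaSet C₂ (L v) (L w)))) ?_
  · set α := sSup (hilbertAlphaSet C₂ (L v) (L w))
    set β := sInf (hilbertBetaSet C₂ (L v) (L w))
    set α' := sSup (hilbertAlphaSet C₂ (L (w - a • v)) (L (b • v - w)))
    set β' := sInf (hilbertBetaSet C₂ (L (w - a • v)) (L (b • v - w)))
    have pβ' : 0 < β' := pα'.trans_le hαβ'
    have h1 : β' / α' ≤ Real.exp D := (Real.log_le_iff_le_exp (by positivity)).1 hD'
    have h2 : Real.exp (-D) ≤ α' / β' := by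
      rw [Real.exp_neg, ← inv_div]
      exact inv_anti₀ (by positivity) h1
    have h3 : Real.log (b / a) * (α' / β') ≤ Real.log (b / a) - Real.log (β / α) := by
      rw [← mul_div_assoc, div_le_iff₀ pβ']
      exact key
    have h4 := mul_le_mul_of_nonneg_left h2 hl
    linarith
  · intro t ht s hs
    have hts := alpha_le_beta hC₂ (hmaps _ ha.2) ht hs
    have ht0 := ht.1
    have hs0 := hs.1
    have hβ : sInf (hilbertBetaSet C₂ (L v) (L w)) ≤ (b + t * a) / (1 + t) := by
      refine csInf_le bB ⟨by positivity, ?_⟩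
      have := hC₂.1.2 _ ht.2 (1 / (1 + t)) (by positivity)
      convert this using 1
      simp only [map_sub, map_smul]
      match_scalars <;> field_simp <;> ring
    have hα : (b + s * a) / (1 + s) ≤ sSup (hilbertAlphaSet C₂ (L v) (L w)) := by
      refine le_csSup bA ⟨by positivity, ?_⟩
      have := hC₂.1.2 _ hs.2 (1 / (1 + s)) (by positivity)
      convert this using 1
      simp only [map_sub, map_smul]
      match_scalars <;> field_simp <;> ring
    have hy := log_ineq ht0 hts ((one_le_div ha0).2 hab)
    set α := sSup (hilbertAlphaSet C₂ (L v) (L w))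
    set β := sInf (hilbertBetaSet C₂ (L v) (L w))
    have pβ : 0 < β := pα.trans_le hαβ
    have e1 : Real.log β ≤ Real.log a + Real.log (b / a + t) - Real.log (1 + t) := by
      rw [← Real.log_mul (by positivity) (by positivity),
        ← Real.log_div (by positivity) (by positivity)]
      apply Real.log_le_log pβ
      convert hβ using 2
      field_simp
    have e2 : Real.log a + Real.log (b / a + s) - Real.log (1 + s) ≤ Real.log α := by
      rw [← Real.log_mul (by positivity) (by positivity),
        ← Real.log_div (by positivity) (by positivity)]
      apply Real.log_le_log (by positivity)
      convert hα using 2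
      field_simp
    rw [Real.log_div pβ.ne' pα.ne']
    have e3 : Real.log β - Real.log α ≤ (1 - t / s) * Real.log (b / a) := by linarith
    have e4 := mul_le_mul_of_nonneg_right e3 hs0.le
    have e5 : (1 - t / s) * Real.log (b / a) * s = (s - t) * Real.log (b / a) := by
      field_simp
    rw [e5] at e4
    linarith

/-- **Birkhoff's cone contraction theorem**: a linear map `L` mapping a convex cone `C₁`
into a convex cone `C₂` such that the image has finite `θ₂`-diameter `≤ D` contracts the
Hilbert projective metrics with rate `1 - e^{-D}`. -/
theorem cone_contraction {E₁ E₂ : Type*} [AddCommGroup E₁] [Module ℝ E₁]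
    [AddCommGroup E₂] [Module ℝ E₂]
    (C₁ : Set E₁) (C₂ : Set E₂) (hC₁ : IsConvexCone C₁) (hC₂ : IsConvexCone C₂)
    (L : E₁ →ₗ[ℝ] E₂) (hmaps : ∀ v ∈ C₁, L v ∈ C₂)
    (D : ℝ) (hD : ∀ v₁ ∈ C₁, ∀ v₂ ∈ C₁, hilbertTheta C₂ (L v₁) (L v₂) ≤ (D : EReal)) :
    ∀ v₁ ∈ C₁, ∀ v₂ ∈ C₁,
      hilbertTheta C₂ (L v₁) (L v₂) ≤
        ((1 - Real.exp (-D) : ℝ) : EReal) * hilbertTheta C₁ v₁ v₂ := by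
  intro v hv w hw
  obtain ⟨nB, nA, hX⟩ := theta_le_spec (hD v hv w hw)
  obtain ⟨pα, hαβ, bA, bB⟩ := theta_spec hC₂ (hmaps v hv) nB nA
  have main := real_contraction C₁ C₂ hC₁ hC₂ L hmaps D hD v w hv hw
  have hθ : hilbertTheta C₂ (L v) (L w) = ((Real.log (sInf (hilbertBetaSet C₂ (L v) (L w)) /
      sSup (hilbertAlphaSet C₂ (L v) (L w))) : ℝ) : EReal) := by
    unfold hilbertTheta
    rw [if_pos ⟨nB, nA⟩]
  have hX0 : 0 ≤ Real.log (sInf (hilbertBetaSet C₂ (L v) (L w)) /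
      sSup (hilbertAlphaSet C₂ (L v) (L w))) := Real.log_nonneg ((one_le_div pα).2 hαβ)
  rw [hθ]
  set X := Real.log (sInf (hilbertBetaSet C₂ (L v) (L w)) /
      sSup (hilbertAlphaSet C₂ (L v) (L w)))
  have hD0 : 0 ≤ D := hX0.trans hX
  rcases hD0.eq_or_lt with h0 | hpos
  · have : X ≤ 0 := by linarith
    rw [← h0]
    simpa using this
  have hk : 0 < 1 - Real.exp (-D) := by
    have : Real.exp (-D) < 1 := by rw [← Real.exp_zero]; exact Real.exp_lt_exp.2 (by linarith)
    linarith
  set k := 1 - Real.exp (-D)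
  unfold hilbertTheta
  split_ifs with hh
  · obtain ⟨mB, mA⟩ := hh
    obtain ⟨qα, hq, cA, cB⟩ := theta_spec hC₁ hv mB mA
    have key := limit_lemma mA mB cA cB (Real.exp (X / k)) 1 (by
      intro a ha b hb
      have h1 := main a b ha hb
      have h2 : X / k ≤ Real.log (b / a) := by
        rw [div_le_iff₀ hk]
        linarith
      have ha0 := ha.1
      have hb0 := hb.1
      have h3 := (Real.le_log_iff_exp_le (by positivity)).1 h2
      rw [le_div_iff₀ ha0] at h3
      linarith)
    rw [one_mul, ← le_div_iff₀ qα,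
      ← Real.le_log_iff_exp_le (div_pos (qα.trans_le hq) qα), div_le_iff₀ hk] at key
    rw [← EReal.coe_mul, EReal.coe_le_coe_iff]
    linarith
  · rw [EReal.coe_mul_top_of_pos hk]
    exact le_top
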